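/- Multiple-argument relation for depth-one cyclotomic harmonic sums: let a, k be positive integers with k ≥ 2, b a nonnegative integer, c a nonzero integer, and n ∈ ℕ. Then S_{(a,b,c)}(k·n) = Σ_{i=0}^{k−1} sgn(c)^i · S_{(k·a, b − a·i, sgn(c)^k·|c|)}(n); note that k·a + (b − a·i) ≥ a + b > 0 for 0 ≤ i ≤ k−1, so the sums on the right are well defined. -/

import Mathlib

/-- Cyclotomic harmonic sums: `cycH [(a₁,b₁,c₁),…] n` is `S_{(a₁,b₁,c₁),…}(n)`;
the empty sum equals `1`. -/
noncomputable def cycH : List (ℕ × ℤ × ℤ) → ℕ → ℝ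
  | [], _ => 1
  | (a, b, c) :: t, n =>
      ∑ i ∈ Finset.Icc 1 n,
        ((c.sign : ℝ)) ^ i / ((a : ℝ) * i + (b : ℝ)) ^ c.natAbs * cycH t i

/-! Every `j ∈ {1, …, k n}` is uniquely `k m - i` with `1 ≤ m ≤ n` and `0 ≤ i < k`. Under this
substitution `a j + b = (k a) m + (b - a i)`, and since `sgn(c)² = 1`, the sign `sgn(c)^j` becomes
`sgn(c)^i (sgn(c)^k)^m`. -/

theorem sum_Icc_one_mul {M : Type*} [AddCommMonoid M] (f : ℕ → M) (k n : ℕ) :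
    ∑ j ∈ Finset.Icc 1 (k * n), f j =
      ∑ i ∈ Finset.range k, ∑ m ∈ Finset.Icc 1 n, f (k * m - i) := by
  rw [Finset.sum_comm]
  induction n with
  | zero => simp
  | succ n ih =>
    have last_block : ∑ i ∈ Finset.range k, f (k * (n + 1) - i) =
        ∑ j ∈ Finset.Ioc (k * n) (k * (n + 1)), f j := by
      rw [Finset.range_eq_Ico, Finset.sum_Ico_reflect f 0 (by lia)]
      congr 1
      grind
    have split := Finset.sum_Ioc_consecutive f (Nat.zero_le (k * n))
      (Nat.mul_le_mul_left k n.le_succ)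
    rw [Finset.sum_Icc_succ_top (by lia), ← ih, last_block]
    simpa only [← Finset.Icc_add_one_left_eq_Ioc, zero_add] using split.symm

theorem pow_mul_pow_eq_pow_sub_of_sq_eq_one {M : Type*} [Monoid M] {s : M} (hs : s ^ 2 = 1)
    {i N : ℕ} (hi : i ≤ N) : s ^ i * s ^ N = s ^ (N - i) := by
  calc s ^ i * s ^ N = s ^ (2 * i + (N - i)) := by rw [← pow_add]; congr 1; lia
    _ = s ^ (N - i) := by rw [pow_add, pow_mul, hs, one_pow, one_mul]

theorem sum_Icc_mul_pow_div_linear_pow {K : Type*} [Field K] {s : K} (hs : s ^ 2 = 1) (a b : K)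
    (p k n : ℕ) :
    ∑ j ∈ Finset.Icc 1 (k * n), s ^ j / (a * j + b) ^ p =
      ∑ i ∈ Finset.range k, s ^ i *
        ∑ m ∈ Finset.Icc 1 n, (s ^ k) ^ m / (k * a * m + (b - a * i)) ^ p := by
  simp only [sum_Icc_one_mul _ k n, Finset.mul_sum]
  refine Finset.sum_congr rfl fun i hi ↦ Finset.sum_congr rfl fun m hm ↦ ?_
  have hle : i ≤ k * m :=
    (Finset.mem_range.mp hi).le.trans (Nat.le_mul_of_pos_right k (Finset.mem_Icc.mp hm).1)
  have hnum : s ^ i * (s ^ k) ^ m = s ^ (k * m - i) := by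
    rw [← pow_mul, pow_mul_pow_eq_pow_sub_of_sq_eq_one hs hle]
  have hden : a * ((k * m - i : ℕ) : K) + b = k * a * m + (b - a * i) := by
    push_cast [hle]
    ring
  rw [hden, ← mul_div_assoc, hnum]

theorem sign_sign_pow_mul_natAbs {c : ℤ} (hc : c ≠ 0) (k : ℕ) :
    (c.sign ^ k * (c.natAbs : ℤ)).sign = c.sign ^ k := by
  have natAbs_eq_one : (c.sign ^ k).natAbs = 1 := by
    rw [Int.natAbs_pow, Int.natAbs_sign_of_ne_zero hc, one_pow]
  calc (c.sign ^ k * (c.natAbs : ℤ)).sign = (c.sign ^ k).sign := by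
        rw [Int.sign_mul, Int.sign_natCast_of_ne_zero (Int.natAbs_ne_zero.mpr hc), mul_one]
    _ = (c.sign ^ k).sign * (c.sign ^ k).natAbs := by rw [natAbs_eq_one, Nat.cast_one, mul_one]
    _ = c.sign ^ k := Int.sign_mul_natAbs _

theorem natAbs_sign_pow_mul_natAbs (c : ℤ) (k : ℕ) :
    (c.sign ^ k * (c.natAbs : ℤ)).natAbs = c.natAbs := by
  rcases eq_or_ne c 0 with rfl | hc
  · simp
  · rw [Int.natAbs_mul, Int.natAbs_pow, Int.natAbs_sign_of_ne_zero hc, one_pow, one_mul,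
      Int.natAbs_natCast]

theorem cycH_singleton (a : ℕ) (b c : ℤ) (n : ℕ) :
    cycH [(a, b, c)] n =
      ∑ i ∈ Finset.Icc 1 n, (c.sign : ℝ) ^ i / ((a : ℝ) * i + b) ^ c.natAbs := by
  simp only [cycH, mul_one]

theorem cycH_depth_one_mult_arg_general (a k : ℕ) (b c : ℤ) (n : ℕ)
    (_hab : 0 < a + b) (hc : c ≠ 0) :
    cycH [(a, b, c)] (k * n) =
      ∑ i ∈ Finset.range k, (c.sign : ℝ) ^ i *
        cycH [(k * a, b - (a : ℤ) * (i : ℤ), c.sign ^ k * (c.natAbs : ℤ))] n := by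
  have hsign : (c.sign : ℝ) ^ 2 = 1 := by
    exact_mod_cast Int.isUnit_sq (Int.isUnit_iff_natAbs_eq.mpr (Int.natAbs_sign_of_ne_zero hc))
  simp only [cycH_singleton, sign_sign_pow_mul_natAbs hc, natAbs_sign_pow_mul_natAbs]
  push_cast
  exact sum_Icc_mul_pow_div_linear_pow hsign a b c.natAbs k n

/-- Multiple-argument relation for depth-one cyclotomic harmonic sums:
`S_{(a,b,c)}(k·n) = Σ_{i=0}^{k−1} sgn(c)^i · S_{(k·a, b − a·i, sgn(c)^k·|c|)}(n)`. -/
theorem cycH_depth_one_mult_arg (a k b : ℕ) (c : ℤ) (n : ℕ)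
    (ha : 0 < a) (hk : 2 ≤ k) (hc : c ≠ 0) :
    cycH [(a, (b : ℤ), c)] (k * n) =
      ∑ i ∈ Finset.range k, ((c.sign : ℝ)) ^ i *
        cycH [(k * a, (b : ℤ) - (a : ℤ) * (i : ℤ), c.sign ^ k * (c.natAbs : ℤ))] n :=
  cycH_depth_one_mult_arg_general a k b c n (by lia) hc
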